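/- Let Ω be the simple Toeplitz subshift defined by coding sequences (a_k) and (n_k). Then for every subadditive function F : W(Ω) → ℝ with asymptotic mean F̄, the limit lim_{k→∞} F(block(k))/|block(k)| exists and equals F̄. -/

import Mathlib

open Filter Topology MeasureTheory

noncomputable section

abbrev SL2 := Matrix.SpecialLinearGroup (Fin 2) ℝ

/-- Operator norm of a 2×2 real matrix acting on Euclidean ℝ². -/
def matNorm (M : Matrix (Fin 2) (Fin 2) ℝ) : ℝ :=
  ‖LinearMap.toContinuousLinearMap (Matrix.toEuclideanLin M)‖

/-- Norm of an element of SL(2,ℝ). -/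
def slNorm (M : SL2) : ℝ := matNorm (M : Matrix (Fin 2) (Fin 2) ℝ)

/-- Action of an SL(2,ℝ) matrix on a euclidean vector. -/
def slAct (M : SL2) (v : EuclideanSpace ℝ (Fin 2)) : EuclideanSpace ℝ (Fin 2) :=
  Matrix.toEuclideanLin (M : Matrix (Fin 2) (Fin 2) ℝ) v

variable {𝒜 : Type*}

/-- The shift by `k` on two-sided sequences; `shift 1` is the left shift `T`. -/
def shift (k : ℤ) (ω : ℤ → 𝒜) : ℤ → 𝒜 := fun n => ω (n + k)

/-- `Ω ⊆ 𝒜^ℤ` is a subshift: nonempty, closed, invariant under the shift and its inverse. -/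
structure IsSubshift [TopologicalSpace 𝒜] (Ω : Set (ℤ → 𝒜)) : Prop where
  nonempty : Ω.Nonempty
  closed : IsClosed Ω
  shift_mem : ∀ ω ∈ Ω, shift 1 ω ∈ Ω
  shift_neg_mem : ∀ ω ∈ Ω, shift (-1) ω ∈ Ω

/-- The word `ω(k) ω(k+1) ⋯ ω(k+n-1)`. -/
def word (ω : ℤ → 𝒜) (k : ℤ) (n : ℕ) : List 𝒜 := (List.range n).map fun i => ω (k + i)

/-- `v` occurs in `ω` at position `k`. -/
def occursAt (v : List 𝒜) (ω : ℤ → 𝒜) (k : ℤ) : Prop := v = word ω k v.length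

/-- The words of length `n` occurring in elements of `Ω`. -/
def WordsN (Ω : Set (ℤ → 𝒜)) (n : ℕ) : Set (List 𝒜) :=
  {v | ∃ ω ∈ Ω, ∃ k : ℤ, v = word ω k n}

/-- The (nonempty) finite words occurring in elements of `Ω`. -/
def Words (Ω : Set (ℤ → 𝒜)) : Set (List 𝒜) :=
  {v | 1 ≤ v.length ∧ v ∈ WordsN Ω v.length}

/-- `A` is locally constant on `Ω`: its value depends only on a finite window around 0. -/
def LocConstOn (Ω : Set (ℤ → 𝒜)) {β : Type*} (A : (ℤ → 𝒜) → β) : Prop :=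
  ∃ N : ℕ, ∀ ω ∈ Ω, ∀ ρ ∈ Ω, (∀ i : ℤ, |i| ≤ (N : ℤ) → ω i = ρ i) → A ω = A ρ

/-- The positive part of the cocycle: `cocycleP A n ω = A(T^{n-1}ω) ⋯ A(ω)`. -/
def cocycleP (A : (ℤ → 𝒜) → SL2) : ℕ → (ℤ → 𝒜) → SL2
  | 0, _ => 1
  | n + 1, ω => A (shift n ω) * cocycleP A n ω

/-- The full cocycle over the shift, `n ∈ ℤ`. -/
def cocycle (A : (ℤ → 𝒜) → SL2) (n : ℤ) (ω : ℤ → 𝒜) : SL2 :=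
  if 0 ≤ n then cocycleP A n.toNat ω else (cocycleP A (-n).toNat (shift n ω))⁻¹

/-- `A` is uniform on `Ω`: `(1/n) log‖A(n,ω)‖` converges uniformly on `Ω`. -/
def IsUniform (Ω : Set (ℤ → 𝒜)) (A : (ℤ → 𝒜) → SL2) : Prop :=
  ∃ Λ : ℝ, TendstoUniformlyOn
    (fun (n : ℕ) (ω : ℤ → 𝒜) => Real.log (slNorm (cocycle A n ω)) / n)
    (fun _ => Λ) atTop Ω

/-- The number of occurrences of `v` in `ω(1)⋯ω(n)`. -/
def occCount (v : List 𝒜) (ω : ℤ → 𝒜) (n : ℕ) : ℕ :=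
  Set.ncard {k : ℤ | 1 ≤ k ∧ k + v.length ≤ (n : ℤ) + 1 ∧ occursAt v ω k}

/-- Uniform existence of word frequencies (unique ergodicity). -/
def UniformWordFreq (Ω : Set (ℤ → 𝒜)) : Prop :=
  ∀ v ∈ Words Ω, ∃ ν : ℝ, TendstoUniformlyOn
    (fun (n : ℕ) (ω : ℤ → 𝒜) => (occCount v ω n : ℝ) / n) (fun _ => ν) atTop Ω

/-- Minimality: every orbit is dense in `Ω`. -/
def IsMinimalSubshift [TopologicalSpace 𝒜] (Ω : Set (ℤ → 𝒜)) : Prop :=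
  ∀ ω ∈ Ω, ∀ ρ ∈ Ω, ρ ∈ closure {σ : ℤ → 𝒜 | ∃ k : ℤ, σ = shift k ω}

/-- Condition (α): for all large `n`, the words of length `n` of `Ω` are exactly the
words `lead j (-k+1) ⋯ lead j (-k+n)`, `0 ≤ k ≤ n`, of the leading words. -/
def CondAlpha (Ω : Set (ℤ → 𝒜)) {r : ℕ} (lead : Fin r → (ℤ → 𝒜)) : Prop :=
  (∀ j, lead j ∈ Ω) ∧ ∃ N : ℕ, ∀ n : ℕ, N ≤ n →
    WordsN Ω n = {v | ∃ j : Fin r, ∃ k : ℕ, k ≤ n ∧ v = word (lead j) (1 - (k : ℤ)) n}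

/-- Condition (β): for every locally constant cocycle the Lyapunov limits along the
leading words exist in both time directions and all have the same value. -/
def CondBeta (Ω : Set (ℤ → 𝒜)) {r : ℕ} (lead : Fin r → (ℤ → 𝒜)) : Prop :=
  ∀ A : (ℤ → 𝒜) → SL2, LocConstOn Ω A → ∃ Λ : ℝ, ∀ j : Fin r,
    Tendsto (fun n : ℕ => Real.log (slNorm (cocycle A n (lead j))) / n) atTop (𝓝 Λ) ∧
    Tendsto (fun n : ℕ => Real.log (slNorm (cocycle A (-(n : ℤ)) (lead j))) / n) atTop (𝓝 Λ)

/-- Condition (γ): along the leading words, for every locally constant cocycle and every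
nonzero vector, at most one of the two one-sided exponents is negative. -/
def CondGamma (Ω : Set (ℤ → 𝒜)) {r : ℕ} (lead : Fin r → (ℤ → 𝒜)) : Prop :=
  ∀ A : (ℤ → 𝒜) → SL2, LocConstOn Ω A → ∀ j : Fin r,
    ∀ v : EuclideanSpace ℝ (Fin 2), v ≠ 0 →
    ¬ (limsup (fun n : ℕ => Real.log ‖slAct (cocycle A n (lead j)) v‖ / n) atTop < 0 ∧
       limsup (fun n : ℕ => Real.log ‖slAct (cocycle A (-(n : ℤ)) (lead j)) v‖ / n) atTop < 0)

/-- The leading sequence condition (LSC). -/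
def SatisfiesLSC (Ω : Set (ℤ → 𝒜)) : Prop :=
  ∃ (r : ℕ) (lead : Fin r → (ℤ → 𝒜)), CondAlpha Ω lead ∧ CondBeta Ω lead ∧ CondGamma Ω lead

/-- `F` is subadditive on the words of `Ω`. -/
def SubadditiveOn (Ω : Set (ℤ → 𝒜)) (F : List 𝒜 → ℝ) : Prop :=
  ∀ x y : List 𝒜, x ∈ Words Ω → y ∈ Words Ω → (x ++ y) ∈ Words Ω → F (x ++ y) ≤ F x + F y

/-- `Fb` is the asymptotic mean `lim_n max { F x / n : x ∈ W(Ω)_n }` of `F`. -/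
def IsAsympMean (Ω : Set (ℤ → 𝒜)) (F : List 𝒜 → ℝ) (Fb : ℝ) : Prop :=
  Tendsto (fun n : ℕ => sSup ((fun x => F x / n) '' WordsN Ω n)) atTop (𝓝 Fb)

/-- Maximal number of pairwise disjoint occurrences of `v` in `ω(1)⋯ω(n)`. -/
def disjCount (v : List 𝒜) (ω : ℤ → 𝒜) (n : ℕ) : ℕ :=
  sSup {m : ℕ | ∃ S : Finset ℤ, S.card = m ∧
    (∀ k ∈ S, 1 ≤ k ∧ k + v.length ≤ (n : ℤ) + 1 ∧ occursAt v ω k) ∧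
    (∀ k ∈ S, ∀ l ∈ S, k ≠ l → (v.length : ℤ) ≤ |k - l|)}

/-- Condition (PQ) for the one-sided word `p(1)p(2)⋯`. -/
def CondPQ (p : ℤ → 𝒜) : Prop :=
  ∃ c : ℝ, 0 < c ∧ ∀ m : ℕ, 1 ≤ m →
    c ≤ liminf (fun n : ℕ => (m : ℝ) / n * disjCount (word p 1 m) p n) atTop

/-- ℓ²(ℤ) over the reals. -/
abbrev Ell2Z : Type := lp (fun _ : ℤ => ℝ) 2

/-- `H` acts as the Jacobi operator with coefficients `f, g` at `ω`. -/
def IsJacobiAt (f g : (ℤ → 𝒜) → ℝ) (ω : ℤ → 𝒜) (H : Ell2Z →L[ℝ] Ell2Z) : Prop :=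
  ∀ u : Ell2Z, ∀ n : ℤ,
    (H u : ∀ _ : ℤ, ℝ) n =
      f (shift n ω) * (u : ∀ _ : ℤ, ℝ) (n - 1) + f (shift (n + 1) ω) * (u : ∀ _ : ℤ, ℝ) (n + 1)
        + g (shift n ω) * (u : ∀ _ : ℤ, ℝ) n

/-- The pair `(f,g)` is periodic on `Ω`. -/
def PeriodicPair (Ω : Set (ℤ → 𝒜)) (f g : (ℤ → 𝒜) → ℝ) : Prop :=
  ∃ P : ℕ, 1 ≤ P ∧ ∀ ω ∈ Ω, f (shift (P : ℤ) ω) = f ω ∧ g (shift (P : ℤ) ω) = g ω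

/-- `S ⊆ ℝ` is a Cantor set of Lebesgue measure zero: compact, empty interior,
no isolated points, Lebesgue measure zero. -/
def IsMeasureZeroCantor (S : Set ℝ) : Prop :=
  IsCompact S ∧ interior S = ∅ ∧ Perfect S ∧ volume S = 0

/-- `n` copies of `x` separated by `n-1` copies of the letter `l`. -/
def sepJoin (x : List 𝒜) (l : 𝒜) (m : ℕ) : List 𝒜 :=
  (List.replicate (m - 1) (x ++ [l])).flatten ++ x

/-- `Blk a nseq (k+1)` is the block `block(k)` of the simple Toeplitz construction
(with `Blk a nseq 0 = block(-1) = ε`). -/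
def Blk (a : ℕ → 𝒜) (nseq : ℕ → ℕ) : ℕ → List 𝒜
  | 0 => []
  | k + 1 => sepJoin (Blk a nseq k) (a k) (nseq k)

/-- `p(1)p(2)⋯` is the one-sided word `block(∞)`: every block is a prefix of it. -/
def IsBlockInf (a : ℕ → 𝒜) (nseq : ℕ → ℕ) (p : ℤ → 𝒜) : Prop :=
  ∀ k : ℕ, word p 1 (Blk a nseq k).length = Blk a nseq k

/-- The simple Toeplitz subshift generated by `block(∞) = p(1)p(2)⋯`: all two-sided
sequences whose finite subwords all occur in `block(∞)`. -/
def toeplitzΩ (p : ℤ → 𝒜) : Set (ℤ → 𝒜) :=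
  {ω | ∀ (i : ℤ) (n : ℕ), ∃ l : ℤ, 1 ≤ l ∧ word ω i n = word p l n}

/-- The eventual alphabet: letters occurring infinitely often in `(a_k)`. -/
def EvAlph (a : ℕ → 𝒜) : Set 𝒜 := {x | ∀ K : ℕ, ∃ k, K ≤ k ∧ a k = x}

/-- The leading word `p^R v | p`: equals `p(n+1)` for `n ≥ 0`, carries the word `v` on
positions `-|v|, …, -1`, and equals `p(-(n+|v|))` for `n < -|v|`. -/
def leadWordGen (p : ℤ → 𝒜) (v : List 𝒜) : ℤ → 𝒜 := fun n =>
  if 0 ≤ n then p (n + 1)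
  else if -(v.length : ℤ) ≤ n then v.getD (n + v.length).toNat (p 1)
  else p (-(n + v.length))

/-- The Gauss map. -/
def gaussMap (x : ℝ) : ℝ := 1 / x - ⌊1 / x⌋

/-- `cfSeq α n` is the continued fraction coefficient `a_{n+1}` of `α`. -/
def cfSeq (α : ℝ) (n : ℕ) : ℕ := ⌊1 / (gaussMap^[n] α)⌋₊

/-- The standard Sturmian words: `sturmW α (n+1) = s_n`, `sturmW α 0 = s_{-1} = 1`,
`sturmW α 1 = s_0 = 0`, `s_1 = s_0^{a_1 - 1} s_{-1}`, `s_n = s_{n-1}^{a_n} s_{n-2}`. -/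
def sturmW (α : ℝ) : ℕ → List (Fin 2)
  | 0 => [1]
  | 1 => [0]
  | 2 => List.replicate (cfSeq α 0 - 1) (0 : Fin 2) ++ [1]
  | n + 3 => (List.replicate (cfSeq α (n + 1)) (sturmW α (n + 2))).flatten ++ sturmW α (n + 1)

/-- The Sturmian subshift with rotation number `α`: all two-sided sequences whose finite
subwords occur in some `s_n`. -/
def sturmΩ (α : ℝ) : Set (ℤ → Fin 2) :=
  {ω | ∀ (i : ℤ) (n : ℕ), ∃ m : ℕ, word ω i n <:+: sturmW α m}

/-- The positive cocycle of a map `A` over a transformation `T`: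
`cocycleH T A n ω = A(T^{n-1}ω) ⋯ A(ω)`. -/
def cocycleH {Ω : Type*} (T : Ω → Ω) (A : Ω → SL2) : ℕ → Ω → SL2
  | 0, _ => 1
  | n + 1, ω => A (T^[n] ω) * cocycleH T A n ω

end

/-!
Up to two short ends, every word of `Ω` is a concatenation of pieces `block(k) x` with single
letters `x`. If `C` bounds `F` on letters, subadditivity along this decomposition gives
`F̄ ≤ (F(block(k)) + C) / (|block(k)| + 1)`. As `F(block(k)) / |block(k)|` is at most the maximum
of `F(x) / |x|` over the words of length `|block(k)|`, it is squeezed to `F̄`.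
-/

section Words

variable {𝒜 : Type*} {Ω : Set (ℤ → 𝒜)} {ω ρ : ℤ → 𝒜}

-- In the definition of `word` the list `List.range n` is first coerced to a list of integers.
theorem word_eq_map_range (ω : ℤ → 𝒜) (i : ℤ) (n : ℕ) :
    word ω i n = (List.range n).map fun r : ℕ => ω (i + r) := by
  simp [word, ← List.map_eq_flatMap]

@[simp]
theorem length_word (ω : ℤ → 𝒜) (i : ℤ) (n : ℕ) : (word ω i n).length = n := by
  simp [word]

theorem word_add (ω : ℤ → 𝒜) (i : ℤ) (m n : ℕ) :
    word ω i (m + n) = word ω i m ++ word ω (i + m) n := by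
  simp [word_eq_map_range, List.range_add, Function.comp_def, add_assoc]

theorem word_eq_word_iff {i j : ℤ} {n : ℕ} :
    word ω i n = word ρ j n ↔ ∀ r : ℕ, r < n → ω (i + r) = ρ (j + r) := by
  simp [word_eq_map_range, List.map_inj_left]

theorem word_add_eq_word_add {i j : ℤ} {n : ℕ} (h : word ω i n = word ρ j n) {s m : ℕ}
    (hsm : s + m ≤ n) : word ω (i + s) m = word ρ (j + s) m := by
  rw [word_eq_word_iff] at h ⊢
  intro r hr
  simpa [add_assoc] using h (s + r) (by lia)

theorem occursAt_of_word_eq_append {i : ℤ} {n : ℕ} {u v w : List 𝒜}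
    (h : word ω i n = u ++ v ++ w) : occursAt v ω (i + u.length) := by
  have hn : n = u.length + v.length + w.length := by simpa [add_assoc] using congrArg List.length h
  rw [hn, word_add, word_add] at h
  exact (List.append_inj_right (List.append_inj_left h (by simp)) (by simp)).symm

theorem word_mem_wordsN (hω : ω ∈ Ω) (i : ℤ) (n : ℕ) : word ω i n ∈ WordsN Ω n :=
  ⟨ω, hω, i, rfl⟩

theorem word_mem_words (hω : ω ∈ Ω) (i : ℤ) {n : ℕ} (hn : 1 ≤ n) : word ω i n ∈ Words Ω := by
  simpa [Words, hn] using word_mem_wordsN hω i n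

theorem length_of_mem_wordsN {n : ℕ} {x : List 𝒜} (hx : x ∈ WordsN Ω n) : x.length = n := by
  obtain ⟨ω, -, i, rfl⟩ := hx
  exact length_word ω i n

theorem wordsN_finite [Finite 𝒜] (Ω : Set (ℤ → 𝒜)) (n : ℕ) : (WordsN Ω n).Finite :=
  (List.finite_length_eq 𝒜 n).subset fun _ hx => length_of_mem_wordsN hx

/-- For every position `i` of every element of `Ω`, one of the next `|B| + 1` positions starts a
run of copies of `B` that are separated by single (arbitrary) letters. Only runs of each finite
length `n` are asked for, so that the condition depends on the words of `Ω` alone. -/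
def OccursWithUnitGaps (Ω : Set (ℤ → 𝒜)) (B : List 𝒜) : Prop :=
  ∀ ω ∈ Ω, ∀ (i : ℤ) (n : ℕ), ∃ s : ℕ, 1 ≤ s ∧ s ≤ B.length + 1 ∧
    ∀ q : ℕ, q < n → occursAt B ω (i + s + q * (B.length + 1))

theorem OccursWithUnitGaps.mem_wordsN {B : List 𝒜} (hB : OccursWithUnitGaps Ω B)
    (hΩ : Ω.Nonempty) : B ∈ WordsN Ω B.length := by
  obtain ⟨ω, hω⟩ := hΩ
  obtain ⟨s, -, -, hs⟩ := hB ω hω 0 1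
  exact ⟨ω, hω, _, hs 0 one_pos⟩

end Words

section Subadditive

variable {𝒜 : Type*} {Ω : Set (ℤ → 𝒜)} {F : List 𝒜 → ℝ} {C Fb : ℝ} {ω : ℤ → 𝒜} {B : List 𝒜}

theorem SubadditiveOn.word_add_le (hF : SubadditiveOn Ω F) (hω : ω ∈ Ω) (i : ℤ) {m n : ℕ}
    (hm : 1 ≤ m) (hn : 1 ≤ n) :
    F (word ω i (m + n)) ≤ F (word ω i m) + F (word ω (i + m) n) := by
  have hmn : word ω i (m + n) ∈ Words Ω := word_mem_words hω i (by lia)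
  rw [word_add] at hmn ⊢
  exact hF _ _ (word_mem_words hω i hm) (word_mem_words hω _ hn) hmn

theorem SubadditiveOn.word_le_mul (hF : SubadditiveOn Ω F)
    (hC : C ∈ upperBounds (F '' WordsN Ω 1)) (hω : ω ∈ Ω) (i : ℤ) {n : ℕ} (hn : 1 ≤ n) :
    F (word ω i n) ≤ n * C := by
  have letter_le (j : ℤ) : F (word ω j 1) ≤ C :=
    hC (Set.mem_image_of_mem F (word_mem_wordsN hω j 1))
  induction n, hn using Nat.le_induction with
  | base => simpa using letter_le i
  | succ n hn ih =>
    push_cast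
    linarith [hF.word_add_le hω i hn le_rfl, letter_le (i + n)]

theorem SubadditiveOn.bddAbove_image_div (hF : SubadditiveOn Ω F)
    (hC : C ∈ upperBounds (F '' WordsN Ω 1)) {n : ℕ} (hn : 1 ≤ n) :
    BddAbove ((fun x => F x / n) '' WordsN Ω n) := by
  refine ⟨C, ?_⟩
  rintro _ ⟨_, ⟨ω, hω, i, rfl⟩, rfl⟩
  have hn' : (0 : ℝ) < n := by exact_mod_cast hn
  rw [div_le_iff₀' hn']
  exact hF.word_le_mul hC hω i hn

theorem SubadditiveOn.word_le_of_forall_occursAt (hF : SubadditiveOn Ω F)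
    (hC : C ∈ upperBounds (F '' WordsN Ω 1)) (hω : ω ∈ Ω) (hB : B ≠ []) {i : ℤ} {m : ℕ}
    (hm : 1 ≤ m) (hocc : ∀ q : ℕ, q < m → occursAt B ω (i + q * (B.length + 1))) :
    F (word ω i (m * (B.length + 1))) ≤ m * (F B + C) := by
  have hlen : 1 ≤ B.length := List.length_pos_of_ne_nil hB
  have piece_le {j : ℤ} (hj : occursAt B ω j) : F (word ω j (B.length + 1)) ≤ F B + C := by
    have h := hF.word_add_le hω j hlen le_rfl
    rw [← hj] at h
    exact h.trans (by simpa using hF.word_le_mul hC hω (j + B.length) le_rfl)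
  induction m, hm using Nat.le_induction with
  | base => simpa using piece_le (hocc 0 one_pos)
  | succ m hm ih =>
    have hlast : F (word ω (i + (m * (B.length + 1) : ℕ)) (B.length + 1)) ≤ F B + C :=
      piece_le (by exact_mod_cast hocc m m.lt_succ_self)
    have hsplit := hF.word_add_le hω i (m := m * (B.length + 1)) (n := B.length + 1)
      (Nat.mul_pos hm (by lia)) (by lia)
    rw [Nat.succ_mul]
    push_cast
    linarith [ih fun q hq => hocc q (by lia)]

-- The two ends have lengths `s ∈ [1, |B| + 1]` and `2 (|B| + 1) - s`, so neither is empty.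
theorem SubadditiveOn.le_of_occursWithUnitGaps (hF : SubadditiveOn Ω F)
    (hC : C ∈ upperBounds (F '' WordsN Ω 1)) (hB : OccursWithUnitGaps Ω B) (hne : B ≠ [])
    {m : ℕ} (hm : 1 ≤ m) {x : List 𝒜} (hx : x ∈ WordsN Ω ((m + 2) * (B.length + 1))) :
    F x ≤ m * (F B + C) + 2 * (B.length + 1) * C := by
  obtain ⟨ω, hω, i, rfl⟩ := hx
  obtain ⟨s, hs, hsB, hocc⟩ := hB ω hω i m
  obtain ⟨t, ht⟩ : ∃ t, 2 * (B.length + 1) = s + t := ⟨_, (Nat.add_sub_of_le (by lia)).symm⟩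
  have hlen : (m + 2) * (B.length + 1) = s + (m * (B.length + 1) + t) := by lia
  have hmB : 1 ≤ m * (B.length + 1) := Nat.mul_pos hm (by lia)
  have ht' : (2 * (B.length + 1) : ℝ) = s + t := by exact_mod_cast ht
  rw [hlen, ht', add_mul]
  have split_left := hF.word_add_le hω i hs (n := m * (B.length + 1) + t) (by lia)
  have split_right := hF.word_add_le hω (i + s) hmB (n := t) (by lia)
  have left_le := hF.word_le_mul hC hω i hs
  have run_le := hF.word_le_of_forall_occursAt hC hω hne hm hocc
  have right_le :=
    hF.word_le_mul hC hω (i + s + (m * (B.length + 1) : ℕ)) (n := t) (by lia)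
  linarith

theorem IsAsympMean.le_of_occursWithUnitGaps (hFb : IsAsympMean Ω F Fb) (hF : SubadditiveOn Ω F)
    (hC : C ∈ upperBounds (F '' WordsN Ω 1)) (hΩ : Ω.Nonempty) (hB : OccursWithUnitGaps Ω B)
    (hne : B ≠ []) : Fb ≤ (F B + C) / (B.length + 1) := by
  obtain ⟨ω, hω⟩ := hΩ
  set c := B.length + 1 with hc
  have hc_pos : 0 < c := by lia
  have lengths_tendsto : Tendsto (fun m : ℕ => (m + 2) * c) atTop atTop :=
    tendsto_atTop_mono
      (fun m => (Nat.le_add_right m 2).trans (Nat.le_mul_of_pos_right _ hc_pos)) tendsto_id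
  have bound_tendsto : Tendsto
      (fun m : ℕ => (F B + C) / c + 2 * (c * C - (F B + C)) / ((m + 2) * c : ℕ)) atTop
      (𝓝 ((F B + C) / c)) := by
    simpa only [add_zero, Function.comp_def] using
      ((tendsto_const_div_atTop_nhds_zero_nat (2 * (c * C - (F B + C)))).comp
        lengths_tendsto).const_add ((F B + C) / c)
  have hc_cast : (B.length + 1 : ℝ) = c := by rw [hc]; push_cast; rfl
  rw [hc_cast]
  refine le_of_tendsto_of_tendsto (hFb.comp lengths_tendsto) bound_tendsto ?_
  filter_upwards [eventually_ge_atTop 1] with m hm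
  refine csSup_le ⟨_, _, word_mem_wordsN hω 0 _, rfl⟩ ?_
  rintro _ ⟨x, hx, rfl⟩
  have hx_le := hF.le_of_occursWithUnitGaps hC hB hne hm hx
  rw [hc_cast] at hx_le
  have hc_pos_real : (0 : ℝ) < c := by exact_mod_cast hc_pos
  push_cast
  rw [div_le_iff₀ (mul_pos (by positivity) hc_pos_real)]
  refine hx_le.trans_eq ?_
  field_simp
  ring

theorem IsAsympMean.tendsto_of_occursWithUnitGaps (hFb : IsAsympMean Ω F Fb)
    (hF : SubadditiveOn Ω F) (hbdd : BddAbove (F '' WordsN Ω 1)) (hΩ : Ω.Nonempty)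
    {ι : Type*} {l : Filter ι} {B : ι → List 𝒜} (hB : ∀ k, OccursWithUnitGaps Ω (B k))
    (hlen : Tendsto (fun k => (B k).length) l atTop) :
    Tendsto (fun k => F (B k) / (B k).length) l (𝓝 Fb) := by
  obtain ⟨C, hC⟩ := hbdd
  have lower_tendsto : Tendsto (fun k => Fb + (Fb - C) / (B k).length) l (𝓝 Fb) := by
    simpa using ((tendsto_const_div_atTop_nhds_zero_nat (Fb - C)).comp hlen).const_add Fb
  refine tendsto_of_tendsto_of_tendsto_of_le_of_le' lower_tendsto (hFb.comp hlen) ?_ ?_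
  all_goals filter_upwards [hlen.eventually_ge_atTop 1] with k hk
  · have hne : B k ≠ [] := List.length_pos_iff.1 hk
    have hpos : (0 : ℝ) < (B k).length := by exact_mod_cast hk
    have hle := hFb.le_of_occursWithUnitGaps hF hC hΩ (hB k) hne
    rw [le_div_iff₀ (by positivity)] at hle
    rw [← sub_nonneg]
    field_simp
    linarith
  · exact le_csSup (hF.bddAbove_image_div hC hk)
      (Set.mem_image_of_mem _ ((hB k).mem_wordsN hΩ))

end Subadditive

section Interlace

variable {𝒜 : Type*}

/-- The word `B x₁ B x₂ ⋯ xₘ B`: copies of `B` separated by the letters of `xs`. Unlike in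
`sepJoin`, the separating letters may differ, which is the form a block takes when it is cut into
blocks of a much lower level. -/
def interlace (B xs : List 𝒜) : List 𝒜 := xs.flatMap (fun x => B ++ [x]) ++ B

theorem interlace_nil (B : List 𝒜) : interlace B [] = B := rfl

theorem interlace_cons (B : List 𝒜) (x : 𝒜) (xs : List 𝒜) :
    interlace B (x :: xs) = B ++ x :: interlace B xs := by
  simp [interlace]

theorem length_interlace_add_one (B xs : List 𝒜) :
    (interlace B xs).length + 1 = (xs.length + 1) * (B.length + 1) := by
  induction xs with
  | nil => simp [interlace_nil]
  | cons x xs ih =>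
    simp only [interlace_cons, List.length_append, List.length_cons]
    lia

theorem interlace_append_cons (B xs ys : List 𝒜) (y : 𝒜) :
    interlace B (xs ++ y :: ys) = interlace B xs ++ y :: interlace B ys := by
  simp [interlace]

theorem interlace_interlace (B xs ys : List 𝒜) :
    interlace (interlace B xs) ys = interlace B (interlace xs ys) := by
  induction ys with
  | nil => rfl
  | cons y ys ih => rw [interlace_cons, interlace_cons, interlace_append_cons, ih]

theorem exists_interlace_eq_append (B : List 𝒜) {xs : List 𝒜} {q : ℕ} (hq : q ≤ xs.length) :
    ∃ u v, interlace B xs = u ++ B ++ v ∧ u.length = q * (B.length + 1) := by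
  induction q generalizing xs with
  | zero => cases xs <;> simp [interlace_nil, interlace_cons]
  | succ q ih =>
    obtain _ | ⟨x, xs⟩ := xs
    · simp at hq
    obtain ⟨u, v, huv, hu⟩ := ih (Nat.le_of_succ_le_succ hq)
    refine ⟨B ++ x :: u, v, by simp [interlace_cons, huv], ?_⟩
    simp only [List.length_append, List.length_cons, hu]
    lia

end Interlace

section Toeplitz

variable {𝒜 : Type*} {a : ℕ → 𝒜} {nseq : ℕ → ℕ} {p : ℤ → 𝒜}

theorem Blk_succ (a : ℕ → 𝒜) (nseq : ℕ → ℕ) (k : ℕ) :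
    Blk a nseq (k + 1) = interlace (Blk a nseq k) (List.replicate (nseq k - 1) (a k)) := by
  simp [Blk, sepJoin, interlace, List.flatMap]

theorem exists_Blk_add_eq_interlace (a : ℕ → 𝒜) (nseq : ℕ → ℕ) (k j : ℕ) :
    ∃ xs, Blk a nseq (k + j) = interlace (Blk a nseq k) xs := by
  induction j with
  | zero => exact ⟨[], rfl⟩
  | succ j ih =>
    obtain ⟨xs, hxs⟩ := ih
    exact ⟨interlace xs _, by rw [← add_assoc, Blk_succ, hxs, interlace_interlace]⟩

theorem le_length_Blk (hn : ∀ k, 2 ≤ nseq k) (k : ℕ) : k ≤ (Blk a nseq k).length := by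
  induction k with
  | zero => exact Nat.zero_le _
  | succ k ih =>
    have hlen : (Blk a nseq (k + 1)).length + 1 = nseq k * ((Blk a nseq k).length + 1) := by
      rw [Blk_succ, length_interlace_add_one, List.length_replicate,
        Nat.sub_add_cancel (one_le_two.trans (hn k))]
    nlinarith [hn k]

theorem IsBlockInf.occursAt_Blk (hp : IsBlockInf a nseq p) (hn : ∀ k, 2 ≤ nseq k) (k q : ℕ) :
    occursAt (Blk a nseq k) p (1 + q * ((Blk a nseq k).length + 1)) := by
  set c := (Blk a nseq k).length + 1
  obtain ⟨xs, hxs⟩ := exists_Blk_add_eq_interlace a nseq k (q * c)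
  have hq : q ≤ xs.length := by
    have hle : k + q * c ≤ (interlace (Blk a nseq k) xs).length := hxs ▸ le_length_Blk hn _
    have hlen := length_interlace_add_one (Blk a nseq k) xs
    have hlt : q * c < (xs.length + 1) * c := by lia
    exact Nat.lt_succ_iff.1 (lt_of_mul_lt_mul_right' hlt)
  obtain ⟨u, v, huv, hu⟩ := exists_interlace_eq_append (Blk a nseq k) hq
  have hocc := occursAt_of_word_eq_append ((hp (k + q * c)).trans (hxs.trans huv))
  rw [hu] at hocc
  exact_mod_cast hocc

theorem IsBlockInf.occursWithUnitGaps_Blk (hp : IsBlockInf a nseq p) (hn : ∀ k, 2 ≤ nseq k)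
    (k : ℕ) : OccursWithUnitGaps (toeplitzΩ p) (Blk a nseq k) := by
  intro ω hω i n
  set B := Blk a nseq k
  set c := B.length + 1 with hc
  obtain ⟨l, hl, hword⟩ := hω i ((n + 1) * c)
  obtain ⟨j, rfl⟩ : ∃ j : ℕ, l = 1 + j := ⟨(l - 1).toNat, by lia⟩
  have hmod : j % c < c := Nat.mod_lt j (by lia)
  obtain ⟨s, hs⟩ : ∃ s, j % c + s = c := ⟨_, Nat.add_sub_of_le hmod.le⟩
  refine ⟨s, by lia, by lia, fun q hq => ?_⟩
  have hjs : j + (s + q * c) = (j / c + 1 + q) * c := by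
    have := Nat.div_add_mod' j c
    lia
  have hfit : s + q * c + B.length ≤ (n + 1) * c := by
    have := Nat.mul_le_mul_right c (Nat.succ_le_of_lt hq)
    lia
  have hocc := hp.occursAt_Blk hn k (j / c + 1 + q)
  have hshift := word_add_eq_word_add hword hfit
  have hpos : (1 + j + (s + q * c : ℕ) : ℤ) = 1 + (j / c + 1 + q : ℕ) * (B.length + 1) := by
    have := congrArg (Nat.cast : ℕ → ℤ) hjs
    push_cast [hc] at this ⊢
    linarith
  rw [hpos] at hshift
  rw [occursAt, add_assoc]
  exact_mod_cast hocc.trans hshift.symm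

/-- Windows of `p` around positions `t 0 < t 1 < ⋯` that each repeat the previous window converge
to a two-sided sequence; no compactness is involved, so the alphabet may be infinite. -/
theorem toeplitzΩ_nonempty_of_recurrent
    (hrec : ∀ N : ℕ, ∃ d : ℕ, 0 < d ∧ word p (1 + d) N = word p 1 N) :
    (toeplitzΩ p).Nonempty := by
  choose d hd_pos hd using hrec
  obtain ⟨t, t_zero, t_succ⟩ :
      ∃ t : ℕ → ℕ, t 0 = 1 ∧ ∀ k, t (k + 1) = t k + d (t k + k) :=
    ⟨fun k => Nat.rec 1 (fun k tk => tk + d (tk + k)) k, rfl, fun _ => rfl⟩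
  have lt_t (k : ℕ) : k < t k := by
    induction k with
    | zero => exact t_zero ▸ one_pos
    | succ k ih => linarith [t_succ k, hd_pos (t k + k)]
  have p_succ (i : ℤ) (k : ℕ) (hi : i.natAbs ≤ k) : p (i + t (k + 1)) = p (i + t k) := by
    have hk := lt_t k
    obtain ⟨r, hr⟩ : ∃ r : ℕ, i + t k = 1 + r := ⟨(i + t k - 1).toNat, by lia⟩
    have h := word_eq_word_iff.1 (hd (t k + k)) r (by lia)
    rw [t_succ]
    convert h using 2
    push_cast
    lia
  have p_eq (i : ℤ) (k : ℕ) (hi : i.natAbs ≤ k) : p (i + t i.natAbs) = p (i + t k) := by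
    induction k, hi using Nat.le_induction with
    | base => rfl
    | succ k hk ih => rw [ih, p_succ i k hk]
  refine ⟨fun i => p (i + t i.natAbs), fun i n => ⟨i + t (i.natAbs + n), ?_, ?_⟩⟩
  · have := lt_t (i.natAbs + n)
    lia
  · rw [word_eq_word_iff]
    intro r hr
    rw [p_eq (i + r) (i.natAbs + n) (by lia)]
    congr 1
    ring

theorem IsBlockInf.toeplitzΩ_nonempty (hp : IsBlockInf a nseq p) (hn : ∀ k, 2 ≤ nseq k) :
    (toeplitzΩ p).Nonempty := by
  refine toeplitzΩ_nonempty_of_recurrent fun N => ⟨(Blk a nseq N).length + 1, by lia, ?_⟩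
  have hocc : word p (1 + ((Blk a nseq N).length + 1 : ℕ)) (Blk a nseq N).length
      = word p 1 (Blk a nseq N).length := by
    simpa [occursAt, hp N, eq_comm] using hp.occursAt_Blk hn N 1
  simpa using word_add_eq_word_add (s := 0) hocc (by simpa using le_length_Blk hn N)

end Toeplitz

theorem statement14_general {𝒜 : Type*}
    (a : ℕ → 𝒜) (nseq : ℕ → ℕ) (hn : ∀ k, 2 ≤ nseq k)
    (p : ℤ → 𝒜) (hp : IsBlockInf a nseq p)
    (F : List 𝒜 → ℝ) (hF : SubadditiveOn (toeplitzΩ p) F)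
    (hbdd : BddAbove (F '' WordsN (toeplitzΩ p) 1))
    (Fb : ℝ) (hFb : IsAsympMean (toeplitzΩ p) F Fb) :
    Tendsto (fun k : ℕ => F (Blk a nseq k) / (Blk a nseq k).length) atTop (𝓝 Fb) :=
  hFb.tendsto_of_occursWithUnitGaps hF hbdd (hp.toeplitzΩ_nonempty hn)
    (hp.occursWithUnitGaps_Blk hn) (tendsto_atTop_mono (le_length_Blk hn) tendsto_id)

/-- Along the blocks of a simple Toeplitz subshift, every subadditive
function attains its asymptotic mean: `F(block(k))/|block(k)| → F̄`. -/
theorem statement14 {𝒜 : Type*} [Fintype 𝒜]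
    (a : ℕ → 𝒜) (nseq : ℕ → ℕ) (ha : ∀ k, a (k + 1) ≠ a k) (hn : ∀ k, 2 ≤ nseq k)
    (p : ℤ → 𝒜) (hp : IsBlockInf a nseq p)
    (F : List 𝒜 → ℝ) (hF : SubadditiveOn (toeplitzΩ p) F)
    (Fb : ℝ) (hFb : IsAsympMean (toeplitzΩ p) F Fb) :
    Filter.Tendsto (fun k : ℕ => F (Blk a nseq (k + 1)) / (Blk a nseq (k + 1)).length)
      Filter.atTop (nhds Fb) :=
  (statement14_general a nseq hn p hp F hF ((wordsN_finite _ 1).image F).bddAbove Fb hFb).comp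
    (tendsto_add_atTop_nat 1)
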